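/- arXiv:2307.14600 — 2 statements merged into one kernel-verified Lean document; each statement's English description precedes it below -/
import Mathlib

section
/- Suppose μ is a non-degenerate probability measure on ℝ satisfying E_μ[exp(λ|X|^p)] < ∞ for all λ > 0 with some p ∈ [v,∞], and W : [0,1]² → ℝ is symmetric measurable with ‖W‖_{L^{qΔ}([0,1]²)} < ∞ for some q > 1 with 1/p + 1/q ≤ 1. Fix θ ∈ ℝ. Then T[Sym[W]](x) is finite for Lebesgue-a.e. x ∈ [0,1], and every maximizer f of the variational problem sup{ θ G_W(f) − ∫₀¹ γ(β(f(x))) dx : f ∈ L, ∫₀¹ γ(β(f(x))) dx < ∞ } satisfies, for a.e. x ∈ [0,1], f(x) = α'( θ v ∫_{[0,1]^{v−1}} Sym[W](x, x₂, …, x_v) ∏_{a=2}^{v} f(x_a) dx₂ ⋯ dx_v ). -/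
/-!
The objective is a multilinear functional minus a convex one, so a first-order argument only needs
to differentiate the multilinear part.

*Integrability.* Finner's inequality (`lmarginal_finner`) shows that the edge product is in `L^q`
when `W ∈ L^{qΔ}` (`memLp_edgeProd`); hence its product with `∏ u(x_a)` is integrable for
`u ∈ L^p` (`integrable_edgeProd_mul`). Fubini then gives the a.e. finiteness of `T[Sym[W]]`, and
`s ↦ G_W(f + s d)` is differentiable at `0` with derivative `v ∫ d(x) symWf(x) dx`
(`Admissible.hasDerivAt_GW`, `Admissible.integral_symWf`).

*Entropy.* The function `gb = γ ∘ β` satisfies `u t - α(u) ≤ gb t` for all `u`, including at the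
endpoints of `N`, with equality exactly when `t = α'(u)` (`ExpInt.le_gb`, `gb_cgf'`,
`eq_cgf'_of_le`), and it is convex on `cl(N)` (`gb_convex`).

*Optimality.* For a maximizer `f` and a competitor `g`, comparing `f` with `f + s (g - f)` as
`s ↓ 0` gives `∫ φ (g - f) ≤ ∫ gb(g) - ∫ gb(f)` where `φ = θ v symWf` (`IsMaximizer.linearized`).
Taking `g = α'(φ)` on `{|φ| ≤ n}` and `g = f` elsewhere makes the integrand
`φ (g - f) - gb(g) + gb(f)` nonnegative with nonpositive integral, so the Fenchel–Young inequality
is an equality a.e. and `f = α'(φ)` on `{|φ| ≤ n}` (`IsMaximizer.ae_eq`).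
-/

open MeasureTheory Filter Set
open scoped ENNReal NNReal

noncomputable section

namespace GibbsMulti

/-- The log moment generating function `α(θ) = log ∫ e^{θx} dμ(x)`. -/
def cgf (μ : Measure ℝ) (θ : ℝ) : ℝ := Real.log (∫ x, Real.exp (θ * x) ∂μ)

/-- `α'`, the derivative of the log-mgf. -/
def cgf' (μ : Measure ℝ) : ℝ → ℝ := deriv (cgf μ)

/-- `N = α'(ℝ)`. -/
def Ndom (μ : Measure ℝ) : Set ℝ := Set.range (cgf' μ)

/-- `β`, the inverse of `α'` on `N`. -/
def betaInv (μ : Measure ℝ) : ℝ → ℝ := Function.invFun (cgf' μ)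

/-- `γ(θ) = θ α'(θ) − α(θ)`. -/
def gammaFn (μ : Measure ℝ) (θ : ℝ) : ℝ := θ * cgf' μ θ - cgf μ θ

open Classical in
/-- The extended function `γ∘β : cl(N) → [0,∞]`, with values `D(δ_t‖μ) = −log μ({t})`
at the endpoints of `N` (which is `∞` when `μ({t}) = 0`). -/
def gb (μ : Measure ℝ) (t : ℝ) : ℝ≥0∞ :=
  if t ∈ Ndom μ then ENNReal.ofReal (gammaFn μ (betaInv μ t))
  else if μ {t} = 0 then ⊤ else ENNReal.ofReal (- Real.log (μ {t}).toReal)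

/-- `μ` is non-degenerate. -/
def Nondeg (μ : Measure ℝ) : Prop := ∀ c : ℝ, μ ≠ Measure.dirac c

/-- Tail condition with (finite) exponent `p`: `E_μ[exp(λ |X|^p)] < ∞` for every `λ > 0`. -/
def TailCond (μ : Measure ℝ) (p : ℝ) : Prop :=
  ∀ l : ℝ, 0 < l → Integrable (fun x => Real.exp (l * |x| ^ p)) μ

/-- `μ` is stochastically non-negative. -/
def StochNonneg (μ : Measure ℝ) : Prop :=
  ∀ t : ℝ, 0 < t → -t ∈ Ndom μ →
    t ∈ Ndom μ ∧ gammaFn μ (betaInv μ t) ≤ gammaFn μ (betaInv μ (-t))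

/-- The uniform probability measure on the cube `[0,1]^v`. -/
def unifCube (v : ℕ) : Measure (Fin v → ℝ) :=
  Measure.pi fun _ => volume.restrict (Icc (0:ℝ) 1)

/-- The uniform probability measure on `[0,1]²`. -/
def unifSq : Measure (ℝ × ℝ) :=
  (volume.restrict (Icc (0:ℝ) 1)).prod (volume.restrict (Icc (0:ℝ) 1))

variable {v : ℕ}

/-- The maximum degree of the graph on `[v]` with edge set `E`. -/
def maxDeg (E : Finset (Fin v × Fin v)) : ℕ :=
  Finset.univ.sup fun a => (E.filter fun e => e.1 = a ∨ e.2 = a).card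

/-- `∏_{(a,b) ∈ E(H)} W(x_a, x_b)`. -/
def edgeProd (E : Finset (Fin v × Fin v)) (W : ℝ → ℝ → ℝ) (x : Fin v → ℝ) : ℝ :=
  ∏ e ∈ E, W (x e.1) (x e.2)

/-- `Sym[W](x₁,…,x_v)`. -/
def symW (E : Finset (Fin v × Fin v)) (W : ℝ → ℝ → ℝ) (x : Fin v → ℝ) : ℝ :=
  (v.factorial : ℝ)⁻¹ * ∑ σ : Equiv.Perm (Fin v), ∏ e ∈ E, W (x (σ e.1)) (x (σ e.2))

/-- `T[Sym[W]](x) = ∫_{[0,1]^{v-1}} Sym[W](x, x₂, …, x_v) dx₂⋯dx_v`. -/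
def TSymW [NeZero v] (E : Finset (Fin v × Fin v)) (W : ℝ → ℝ → ℝ) (x : ℝ) : ℝ :=
  ∫ z, symW E W (Function.update z 0 x) ∂(unifCube v)

/-- `∫_{[0,1]^{v-1}} Sym[W](x, x₂, …, x_v) ∏_{a=2}^v f(x_a) dx₂⋯dx_v`. -/
def symWf [NeZero v] (E : Finset (Fin v × Fin v)) (W : ℝ → ℝ → ℝ) (f : ℝ → ℝ) (x : ℝ) : ℝ :=
  ∫ z, symW E W (Function.update z 0 x) * ∏ a ∈ Finset.univ.erase (0 : Fin v), f (z a)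
    ∂(unifCube v)

/-- `G_W(f)`. -/
def GW (E : Finset (Fin v × Fin v)) (W : ℝ → ℝ → ℝ) (f : ℝ → ℝ) : ℝ :=
  ∫ z, edgeProd E W z * ∏ a, f (z a) ∂(unifCube v)

/-- Membership in the class `𝓛` of measurable functions `[0,1] → cl(N)` with
`∫₀¹ |f|^p < ∞`. -/
def MemL (μ : Measure ℝ) (p : ℝ) (f : ℝ → ℝ) : Prop :=
  Measurable f ∧ (∀ x ∈ Icc (0:ℝ) 1, f x ∈ closure (Ndom μ)) ∧
    (∫⁻ x in Icc (0:ℝ) 1, ENNReal.ofReal (|f x| ^ p)) < ⊤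

/-- The objective functional `θ G_W(f) − ∫₀¹ γ(β(f(x))) dx`. -/
def objective (μ : Measure ℝ) (E : Finset (Fin v × Fin v)) (W : ℝ → ℝ → ℝ) (θ : ℝ)
    (f : ℝ → ℝ) : ℝ :=
  θ * GW E W f - (∫⁻ x in Icc (0:ℝ) 1, gb μ (f x)).toReal

/-- `f` is a maximizer of the variational problem
`sup { θ G_W(f) − ∫₀¹ γ(β(f)) : f ∈ 𝓛, ∫₀¹ γ(β(f)) < ∞ }`. -/
def IsMaximizer (μ : Measure ℝ) (p : ℝ) (E : Finset (Fin v × Fin v)) (W : ℝ → ℝ → ℝ)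
    (θ : ℝ) (f : ℝ → ℝ) : Prop :=
  MemL μ p f ∧ (∫⁻ x in Icc (0:ℝ) 1, gb μ (f x)) < ⊤ ∧
    ∀ g : ℝ → ℝ, MemL μ p g → (∫⁻ x in Icc (0:ℝ) 1, gb μ (g x)) < ⊤ →
      objective μ E W θ g ≤ objective μ E W θ f

/-! ### The log-mgf and the extended entropy `γ ∘ β` -/

/-- Under the tail condition with an exponent `p ≥ 1` every exponential moment is finite. -/
lemma integrable_exp_mul {μ : Measure ℝ} [IsProbabilityMeasure μ] {p : ℝ} (hp : 1 ≤ p)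
    (ht : TailCond μ p) (u : ℝ) : Integrable (fun x => Real.exp (u * x)) μ := by
  have h := (ht (|u| + 1) (by positivity)).const_mul (Real.exp (|u| + 1))
  refine h.mono' (by fun_prop) (Eventually.of_forall fun x => ?_)
  rw [Real.norm_eq_abs, abs_of_pos (Real.exp_pos _), ← Real.exp_add]
  apply Real.exp_le_exp.2
  have h1 : |x| ≤ 1 + |x| ^ p := by
    rcases le_total |x| 1 with h | h
    · have := Real.rpow_nonneg (abs_nonneg x) p
      linarith
    · have : |x| ^ (1:ℝ) ≤ |x| ^ p := Real.rpow_le_rpow_of_exponent_le h hp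
      rw [Real.rpow_one] at this
      linarith
  calc u * x ≤ |u * x| := le_abs_self _
    _ = |u| * |x| := abs_mul _ _
    _ ≤ (|u| + 1) * (1 + |x| ^ p) := by gcongr; linarith
    _ = _ := by ring

/-- All exponential moments of `μ` are finite. -/
def ExpInt (μ : Measure ℝ) : Prop := ∀ u : ℝ, Integrable (fun x => Real.exp (u * x)) μ

lemma ExpInt.mem_interior {μ : Measure ℝ} (h : ExpInt μ) (u : ℝ) :
    u ∈ interior (ProbabilityTheory.integrableExpSet (id : ℝ → ℝ) μ) := by
  have : ProbabilityTheory.integrableExpSet (id : ℝ → ℝ) μ = univ := by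
    ext t
    simpa [ProbabilityTheory.integrableExpSet] using h t
  simp [this]

lemma cgf_eq (μ : Measure ℝ) : cgf μ = ProbabilityTheory.cgf id μ := rfl

lemma ExpInt.analyticAt {μ : Measure ℝ} (h : ExpInt μ) (u : ℝ) : AnalyticAt ℝ (cgf μ) u := by
  rw [cgf_eq]
  exact ProbabilityTheory.analyticAt_cgf (h.mem_interior u)

lemma ExpInt.hasDerivAt {μ : Measure ℝ} (h : ExpInt μ) (u : ℝ) :
    HasDerivAt (cgf μ) (cgf' μ u) u :=
  (h.analyticAt u).differentiableAt.hasDerivAt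

lemma ExpInt.continuous_cgf' {μ : Measure ℝ} (h : ExpInt μ) : Continuous (cgf' μ) :=
  continuous_iff_continuousAt.2 fun u => (h.analyticAt u).deriv.continuousAt

lemma ExpInt.continuous_cgf {μ : Measure ℝ} (h : ExpInt μ) : Continuous (cgf μ) :=
  continuous_iff_continuousAt.2 fun u => (h.analyticAt u).continuousAt

lemma ExpInt.mgf_pos {μ : Measure ℝ} [IsProbabilityMeasure μ] (h : ExpInt μ) (u : ℝ) :
    0 < ∫ x, Real.exp (u * x) ∂μ :=
  integral_exp_pos (h u)

/-- The tangent line inequality for the log-mgf, which expresses its convexity. It follows by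
integrating `e^y ≥ e^c (1 + y - c)` against the tilted measure. -/
lemma ExpInt.tangent {μ : Measure ℝ} [IsProbabilityMeasure μ] (h : ExpInt μ) (φ u : ℝ) :
    cgf μ φ + (u - φ) * cgf' μ φ ≤ cgf μ u := by
  have hd : cgf' μ φ = (∫ x, x * Real.exp (φ * x) ∂μ) / ∫ x, Real.exp (φ * x) ∂μ :=
    ProbabilityTheory.deriv_cgf (X := id) (h.mem_interior φ)
  have hint : Integrable (fun x : ℝ => x * Real.exp (φ * x)) μ := by
    simpa using ProbabilityTheory.integrable_pow_mul_exp_of_mem_interior_integrableExpSet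
      (X := id) (h.mem_interior φ) 1
  set M := ∫ x, Real.exp (φ * x) ∂μ with hM
  have hMpos : 0 < M := h.mgf_pos φ
  set c := (u - φ) * cgf' μ φ with hc
  have key : Real.exp c * M ≤ ∫ x, Real.exp (u * x) ∂μ := by
    have h1 : ∫ x, Real.exp c * ((1 - c) * Real.exp (φ * x)
        + (u - φ) * (x * Real.exp (φ * x))) ∂μ = Real.exp c * M := by
      rw [integral_const_mul, integral_add ((h φ).const_mul _) (hint.const_mul _),
        integral_const_mul, integral_const_mul, ← hM]
      have : ∫ x, x * Real.exp (φ * x) ∂μ = cgf' μ φ * M := by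
        rw [hd, div_mul_cancel₀ _ hMpos.ne']
      rw [this, hc]
      ring
    rw [← h1]
    refine integral_mono ((((h φ).const_mul _).add (hint.const_mul _)).const_mul _) (h u) ?_
    intro x
    have h2 := Real.add_one_le_exp ((u - φ) * x - c)
    have h3 : Real.exp (u * x) = Real.exp c * Real.exp (φ * x) * Real.exp ((u - φ) * x - c) := by
      rw [← Real.exp_add, ← Real.exp_add]; congr 1; ring
    simp only
    rw [h3]
    have h4 : 0 < Real.exp c * Real.exp (φ * x) := by positivity
    nlinarith [mul_le_mul_of_nonneg_left h2 h4.le]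
  have h5 := Real.log_le_log (by positivity) key
  rw [Real.log_mul (Real.exp_pos _).ne' hMpos.ne', Real.log_exp] at h5
  unfold cgf
  rw [← hM]
  linarith

lemma cgf_zero (μ : Measure ℝ) [IsProbabilityMeasure μ] : cgf μ 0 = 0 := by
  simp [cgf]

lemma cgf'_betaInv {μ : Measure ℝ} {t : ℝ} (ht : t ∈ Ndom μ) : cgf' μ (betaInv μ t) = t :=
  Function.invFun_eq ht

/-- On `N`, the value `γ(β(t))` is the supremum over `u` of `u t - α(u)`. -/
lemma ExpInt.le_gamma {μ : Measure ℝ} [IsProbabilityMeasure μ] (h : ExpInt μ) {t : ℝ}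
    (ht : t ∈ Ndom μ) (u : ℝ) : u * t - cgf μ u ≤ gammaFn μ (betaInv μ t) := by
  have := h.tangent (betaInv μ t) u
  rw [cgf'_betaInv ht] at this
  unfold gammaFn
  rw [cgf'_betaInv ht]
  linarith

/-- Fenchel–Young inequality for `gb`, including the values at the endpoints of `N`. -/
lemma ExpInt.le_gb {μ : Measure ℝ} [IsProbabilityMeasure μ] (h : ExpInt μ) (t u : ℝ) :
    ENNReal.ofReal (u * t - cgf μ u) ≤ gb μ t := by
  unfold gb
  split_ifs with h1 h2
  · exact ENNReal.ofReal_le_ofReal (h.le_gamma h1 u)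
  · exact le_top
  · apply ENNReal.ofReal_le_ofReal
    have hm : 0 < (μ {t}).toReal := ENNReal.toReal_pos h2 (measure_ne_top _ _)
    have : Real.exp (u * t) * (μ {t}).toReal ≤ ∫ x, Real.exp (u * x) ∂μ := by
      have h3 : ∫ x in ({t} : Set ℝ), Real.exp (u * x) ∂μ ≤ ∫ x, Real.exp (u * x) ∂μ :=
        setIntegral_le_integral (h u) (Eventually.of_forall fun x => (Real.exp_pos _).le)
      rw [integral_singleton] at h3
      simpa [Measure.real, mul_comm] using h3
    have h5 := Real.log_le_log (by positivity) this
    rw [Real.log_mul (Real.exp_pos _).ne' hm.ne', Real.log_exp] at h5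
    unfold cgf
    linarith

lemma ExpInt.le_gb_toReal {μ : Measure ℝ} [IsProbabilityMeasure μ] (h : ExpInt μ) {t : ℝ}
    (ht : gb μ t ≠ ⊤) (u : ℝ) : u * t - cgf μ u ≤ (gb μ t).toReal :=
  (ENNReal.ofReal_le_iff_le_toReal ht).1 (h.le_gb t u)

lemma gb_eq_iSup_of_mem {μ : Measure ℝ} [IsProbabilityMeasure μ] (h : ExpInt μ) {t : ℝ}
    (ht : t ∈ Ndom μ) : gb μ t = ⨆ u : ℝ, ENNReal.ofReal (u * t - cgf μ u) := by
  apply le_antisymm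
  · refine le_iSup_of_le (betaInv μ t) ?_
    rw [gb, if_pos ht, gammaFn, cgf'_betaInv ht]
  · exact iSup_le fun u => h.le_gb t u

/-- Equality case of Fenchel–Young at `t = α'(φ)`. -/
lemma gb_cgf' {μ : Measure ℝ} [IsProbabilityMeasure μ] (h : ExpInt μ) (φ : ℝ) :
    gb μ (cgf' μ φ) = ENNReal.ofReal (gammaFn μ φ) := by
  apply le_antisymm
  · rw [gb_eq_iSup_of_mem h ⟨φ, rfl⟩]
    refine iSup_le fun u => ENNReal.ofReal_le_ofReal ?_
    have := h.tangent φ u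
    unfold gammaFn
    linarith
  · exact h.le_gb _ φ

lemma gammaFn_nonneg {μ : Measure ℝ} [IsProbabilityMeasure μ] (h : ExpInt μ) (φ : ℝ) :
    0 ≤ gammaFn μ φ := by
  have := h.tangent φ 0
  rw [cgf_zero] at this
  unfold gammaFn
  linarith

lemma gb_cgf'_toReal {μ : Measure ℝ} [IsProbabilityMeasure μ] (h : ExpInt μ) (φ : ℝ) :
    (gb μ (cgf' μ φ)).toReal = φ * cgf' μ φ - cgf μ φ := by
  rw [gb_cgf' h, ENNReal.toReal_ofReal (gammaFn_nonneg h φ), gammaFn]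

/-- Equality in Fenchel–Young forces `t = α'(φ)`, because `u ↦ u t - α(u)` then has a maximum
at `φ`. -/
lemma eq_cgf'_of_le {μ : Measure ℝ} [IsProbabilityMeasure μ] (h : ExpInt μ) {t φ : ℝ}
    (ht : gb μ t ≠ ⊤) (he : (gb μ t).toReal ≤ φ * t - cgf μ φ) : t = cgf' μ φ := by
  have hmax : IsLocalMax (fun u => u * t - cgf μ u) φ :=
    Eventually.of_forall fun u => (h.le_gb_toReal ht u).trans he
  have hd : HasDerivAt (fun u => u * t - cgf μ u) (1 * t - cgf' μ φ) φ :=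
    ((hasDerivAt_id φ).mul_const t).sub (h.hasDerivAt φ)
  have := hmax.hasDerivAt_eq_zero hd
  linarith

lemma ordConnected_Ndom {μ : Measure ℝ} (h : ExpInt μ) : (Ndom μ).OrdConnected := by
  have := (ordConnected_univ (α := ℝ)).image_deriv (f := cgf μ)
    fun x _ => (h.analyticAt x).differentiableAt
  rwa [image_univ] at this

lemma convex_closure_Ndom {μ : Measure ℝ} (h : ExpInt μ) : Convex ℝ (closure (Ndom μ)) :=
  (ordConnected_Ndom h).convex.closure

lemma mem_Ndom_of_between {μ : Measure ℝ} (h : ExpInt μ) {a b t : ℝ}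
    (ha : a ∈ closure (Ndom μ)) (hb : b ∈ closure (Ndom μ)) (hat : a < t) (htb : t < b) :
    t ∈ Ndom μ := by
  obtain ⟨a', ha', ha2⟩ := mem_closure_iff.1 ha (Iio t) isOpen_Iio hat
  obtain ⟨b', hb', hb2⟩ := mem_closure_iff.1 hb (Ioi t) isOpen_Ioi htb
  exact (ordConnected_Ndom h).out ha2 hb2 ⟨le_of_lt ha', le_of_lt hb'⟩

/-- Convexity of `gb` on `cl(N)`. A nontrivial convex combination lies in `N`, where `gb` is a
supremum of affine functions, each of which is below `gb` at the two end points. -/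
lemma gb_convex {μ : Measure ℝ} [IsProbabilityMeasure μ] (h : ExpInt μ) {a b s : ℝ}
    (ha : a ∈ closure (Ndom μ)) (hb : b ∈ closure (Ndom μ)) (hs0 : 0 < s) (hs1 : s < 1) :
    gb μ (a + s * (b - a)) ≤ ENNReal.ofReal (1 - s) * gb μ a + ENNReal.ofReal s * gb μ b := by
  rcases eq_or_ne a b with rfl | hab
  · rw [← add_mul, ← ENNReal.ofReal_add (by linarith) hs0.le]
    simp
  have hmem : a + s * (b - a) ∈ Ndom μ := by
    rcases lt_or_gt_of_ne hab with hab | hab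
    · exact mem_Ndom_of_between h ha hb (by nlinarith) (by nlinarith)
    · exact mem_Ndom_of_between h hb ha (by nlinarith) (by nlinarith)
  rw [gb_eq_iSup_of_mem h hmem]
  refine iSup_le fun u => ?_
  calc ENNReal.ofReal (u * (a + s * (b - a)) - cgf μ u)
      = ENNReal.ofReal ((1 - s) * (u * a - cgf μ u) + s * (u * b - cgf μ u)) := by
        congr 1; ring
    _ ≤ ENNReal.ofReal ((1 - s) * (u * a - cgf μ u)) + ENNReal.ofReal (s * (u * b - cgf μ u)) :=
        ENNReal.ofReal_add_le
    _ = ENNReal.ofReal (1 - s) * ENNReal.ofReal (u * a - cgf μ u)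
        + ENNReal.ofReal s * ENNReal.ofReal (u * b - cgf μ u) := by
        rw [ENNReal.ofReal_mul (by linarith), ENNReal.ofReal_mul hs0.le]
    _ ≤ _ := by gcongr <;> exact h.le_gb _ _

lemma measurable_gb {μ : Measure ℝ} [IsProbabilityMeasure μ] (h : ExpInt μ) :
    Measurable (gb μ) := by
  classical
  have h1 : Measurable fun t : ℝ => ⨆ u : ℝ, ENNReal.ofReal (u * t - cgf μ u) := by
    refine LowerSemicontinuous.measurable (lowerSemicontinuous_iSup fun u => ?_)
    exact (ENNReal.continuous_ofReal.comp (by fun_prop)).lowerSemicontinuous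
  have h2 : Measurable fun t : ℝ => μ {t} := by
    have := measurable_measure_prodMk_left (ν := μ) (measurableSet_diagonal (α := ℝ))
    convert this using 3 with t
    ext y
    simp [eq_comm]
  have h3 : Measurable fun t : ℝ =>
      if μ {t} = 0 then (⊤ : ℝ≥0∞) else ENNReal.ofReal (- Real.log (μ {t}).toReal) :=
    Measurable.ite (h2 (measurableSet_singleton 0)) measurable_const
      (h2.ennreal_toReal.log.neg.ennreal_ofReal)
  have h4 : gb μ = fun t => if t ∈ Ndom μ then ⨆ u : ℝ, ENNReal.ofReal (u * t - cgf μ u)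
      else if μ {t} = 0 then (⊤ : ℝ≥0∞) else ENNReal.ofReal (- Real.log (μ {t}).toReal) := by
    ext t
    by_cases ht : t ∈ Ndom μ
    · rw [if_pos ht, gb_eq_iSup_of_mem h ht]
    · rw [gb, if_neg ht, if_neg ht]
  rw [h4]
  exact Measurable.ite (ordConnected_Ndom h).measurableSet h1 h3

/-! ### Finner's inequality -/

/-- Finner's form of Hölder's inequality for marginals. If every coordinate occurs in at most `D`
of the functions `F e`, then integrating out the coordinates in `S` one at a time, with Hölder's
inequality for each, bounds the marginal of the geometric mean. Coordinates that occur in fewer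
than `D` functions are treated by an additional factor `1`, as the measures have mass one. -/
lemma lmarginal_finner {ι κ : Type*} [Fintype ι] [DecidableEq ι] (m : ι → Measure ℝ)
    [∀ i, IsProbabilityMeasure (m i)] (E : Finset κ) (F : κ → (ι → ℝ) → ℝ≥0∞)
    (hF : ∀ e, Measurable (F e)) (dep : κ → Finset ι)
    (hdep : ∀ e, ∀ a ∉ dep e, ∀ x y, F e (Function.update x a y) = F e x)
    (D : ℕ) (hD : 0 < D) (hcard : ∀ a, (E.filter fun e => a ∈ dep e).card ≤ D)
    (S : Finset ι) (x : ι → ℝ) :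
    (lmarginal m S (fun z => ∏ e ∈ E, F e z ^ (1 / (D : ℝ)))) x
      ≤ ∏ e ∈ E, (lmarginal m S (F e) x) ^ (1 / (D : ℝ)) := by
  have hmeas : Measurable (fun z => ∏ e ∈ E, F e z ^ (1 / (D : ℝ))) :=
    Finset.measurable_prod _ fun e _ => (hF e).pow_const _
  induction S using Finset.induction_on generalizing x with
  | empty => simp
  | insert a S ha ih =>
    rw [lmarginal_insert _ hmeas ha]
    have hconst : ∀ e, a ∉ dep e → ∀ y,
        lmarginal m S (F e) (Function.update x a y) = lmarginal m S (F e) x := by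
      intro e he y
      rw [lmarginal_update_of_notMem (hF e) ha]
      congr 1
      funext z
      exact hdep e a he z y
    have hq : (1 - ((E.filter fun e => a ∈ dep e).card : ℝ) * (1 / D)) ≥ 0 := by
      have h1 : ((E.filter fun e => a ∈ dep e).card : ℝ) ≤ D := by exact_mod_cast hcard a
      have h2 : (0:ℝ) < D := by exact_mod_cast hD
      have : ((E.filter fun e => a ∈ dep e).card : ℝ) * (1 / D) ≤ 1 := by
        rw [mul_one_div, div_le_one h2]; exact h1
      linarith
    have hm : ∀ e, Measurable fun y => lmarginal m S (F e) (Function.update x a y) := fun e =>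
      ((hF e).lmarginal m).comp (measurable_update x)
    calc ∫⁻ y, (lmarginal m S fun z => ∏ e ∈ E, F e z ^ (1 / (D : ℝ))) (Function.update x a y) ∂m a
        ≤ ∫⁻ y, ∏ e ∈ E, (lmarginal m S (F e) (Function.update x a y)) ^ (1 / (D : ℝ)) ∂m a :=
          lintegral_mono fun y => ih _
      _ = ∫⁻ y, (∏ e ∈ E with a ∉ dep e, (lmarginal m S (F e) x) ^ (1 / (D : ℝ))) *
            ((1 : ℝ≥0∞) ^ (1 - ((E.filter fun e => a ∈ dep e).card : ℝ) * (1 / D)) *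
            ∏ e ∈ E with a ∈ dep e,
              (lmarginal m S (F e) (Function.update x a y)) ^ (1 / (D : ℝ))) ∂m a := by
          congr 1
          ext y
          rw [← Finset.prod_filter_mul_prod_filter_not E (fun e => a ∈ dep e), mul_comm,
            ENNReal.one_rpow, one_mul]
          congr 1
          refine Finset.prod_congr rfl fun e he => ?_
          rw [hconst e (Finset.mem_filter.1 he).2]
      _ = (∏ e ∈ E with a ∉ dep e, (lmarginal m S (F e) x) ^ (1 / (D : ℝ))) *
            ∫⁻ y, (1 : ℝ≥0∞) ^ (1 - ((E.filter fun e => a ∈ dep e).card : ℝ) * (1 / D)) *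
            ∏ e ∈ E with a ∈ dep e,
              (lmarginal m S (F e) (Function.update x a y)) ^ (1 / (D : ℝ)) ∂m a := by
          rw [lintegral_const_mul]
          exact (Finset.measurable_prod _ fun e _ => (hm e).pow_const _).const_mul _
      _ ≤ (∏ e ∈ E with a ∉ dep e, (lmarginal m S (F e) x) ^ (1 / (D : ℝ))) *
            ((∫⁻ _y, (1 : ℝ≥0∞) ∂m a) ^
              (1 - ((E.filter fun e => a ∈ dep e).card : ℝ) * (1 / D)) *
            ∏ e ∈ E with a ∈ dep e,
              (∫⁻ y, lmarginal m S (F e) (Function.update x a y) ∂m a) ^ (1 / (D : ℝ))) := by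
          gcongr
          refine ENNReal.lintegral_mul_prod_norm_pow_le _ aemeasurable_const
            (fun e _ => (hm e).aemeasurable) _ ?_ hq (fun _ _ => by positivity)
          simp
      _ = ∏ e ∈ E, (lmarginal m (insert a S) (F e) x) ^ (1 / (D : ℝ)) := by
          rw [← Finset.prod_filter_mul_prod_filter_not E (fun e => a ∈ dep e)
            (fun e => (lmarginal m (insert a S) (F e) x) ^ (1 / (D : ℝ))), mul_comm]
          congr 1
          · simp only [lintegral_const, measure_univ, mul_one, ENNReal.one_rpow, one_mul]
            refine Finset.prod_congr rfl fun e _ => ?_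
            rw [lmarginal_insert _ (hF e) ha]
          · refine Finset.prod_congr rfl fun e he => ?_
            rw [lmarginal_insert _ (hF e) ha]
            simp [hconst e (Finset.mem_filter.1 he).2]

/-! ### Integration over the cube -/

/-- The uniform probability measure on `[0,1]`. -/
abbrev unif : Measure ℝ := volume.restrict (Icc (0:ℝ) 1)

instance isProbabilityMeasure_unif : IsProbabilityMeasure unif := ⟨by simp⟩

instance isProbabilityMeasure_unifCube (v : ℕ) : IsProbabilityMeasure (unifCube v) := by
  unfold unifCube; infer_instance

/-- Replacing one coordinate by an independent uniform variable preserves the uniform measure. -/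
lemma measurePreserving_update (a : Fin v) :
    MeasurePreserving (fun w : ℝ × (Fin v → ℝ) => Function.update w.2 a w.1)
      (unif.prod (unifCube v)) (unifCube v) := by
  have hm : Measurable (fun w : ℝ × (Fin v → ℝ) => Function.update w.2 a w.1) :=
    measurable_update'.comp measurable_swap
  refine ⟨hm, ?_⟩
  symm
  refine Measure.pi_eq fun s hs => ?_
  rw [Measure.map_apply hm (MeasurableSet.univ_pi hs)]
  have : (fun w : ℝ × (Fin v → ℝ) => Function.update w.2 a w.1) ⁻¹' (univ.pi s)
      = s a ×ˢ univ.pi (Function.update s a univ) := by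
    ext ⟨y, z⟩
    simp only [mem_preimage, Set.mem_pi, mem_univ, true_imp_iff, mem_prod]
    constructor
    · intro h
      refine ⟨by simpa using h a, fun i => ?_⟩
      rcases eq_or_ne i a with rfl | hi
      · simp
      · simpa [hi] using h i
    · rintro ⟨h1, h2⟩ i
      rcases eq_or_ne i a with rfl | hi
      · simpa using h1
      · simpa [hi] using h2 i
  rw [this, Measure.prod_prod, unifCube, Measure.pi_pi,
    ← Finset.mul_prod_erase Finset.univ _ (Finset.mem_univ a),
    ← Finset.mul_prod_erase Finset.univ (fun i => unif (s i)) (Finset.mem_univ a)]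
  congr 1
  simp only [Function.update_self, measure_univ, one_mul]
  refine Finset.prod_congr rfl fun i hi => ?_
  rw [Function.update_of_ne (Finset.ne_of_mem_erase hi)]

lemma measurePreserving_perm (σ : Equiv.Perm (Fin v)) :
    MeasurePreserving (fun z : Fin v → ℝ => z ∘ σ) (unifCube v) (unifCube v) := by
  have hm : Measurable (fun z : Fin v → ℝ => z ∘ σ) :=
    measurable_pi_lambda _ fun i => measurable_pi_apply _
  refine ⟨hm, ?_⟩
  symm
  refine Measure.pi_eq fun s hs => ?_
  rw [Measure.map_apply hm (MeasurableSet.univ_pi hs)]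
  have : (fun z : Fin v → ℝ => z ∘ σ) ⁻¹' (univ.pi s) = univ.pi (fun i => s (σ.symm i)) := by
    ext z
    simp only [mem_preimage, Set.mem_pi, mem_univ, true_imp_iff, Function.comp]
    exact ⟨fun h i => by simpa using h (σ.symm i), fun h i => by simpa using h (σ i)⟩
  rw [this, unifCube, Measure.pi_pi]
  exact Equiv.prod_comp σ.symm (fun i => unif (s i))

/-- The joint law of two distinct coordinates is uniform on the square. -/
lemma measurePreserving_pair {a b : Fin v} (hab : a ≠ b) :
    MeasurePreserving (fun z : Fin v → ℝ => (z a, z b)) (unifCube v) unifSq := by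
  have hm : Measurable (fun z : Fin v → ℝ => (z a, z b)) := by fun_prop
  refine ⟨hm, ?_⟩
  symm
  refine Measure.prod_eq fun s t hs ht => ?_
  rw [Measure.map_apply hm (hs.prod ht)]
  have : (fun z : Fin v → ℝ => (z a, z b)) ⁻¹' (s ×ˢ t)
      = univ.pi (Function.update (Function.update (fun _ => univ) a s) b t) := by
    ext z
    simp only [mem_preimage, Set.mem_pi, mem_univ, true_imp_iff, mem_prod]
    constructor
    · rintro ⟨h1, h2⟩ i
      rcases eq_or_ne i b with rfl | hi
      · simpa using h2
      rcases eq_or_ne i a with rfl | hi'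
      · simpa [hi] using h1
      · simp [hi, hi']
    · intro h
      exact ⟨by simpa [hab] using h a, by simpa using h b⟩
  rw [this, unifCube, Measure.pi_pi,
    ← Finset.mul_prod_erase Finset.univ _ (Finset.mem_univ a),
    ← Finset.mul_prod_erase (Finset.univ.erase a) _
      (Finset.mem_erase.2 ⟨hab.symm, Finset.mem_univ b⟩),
    Finset.prod_eq_one]
  · simp [hab]
  · intro i hi
    simp only [Finset.mem_erase, Finset.mem_univ, and_true] at hi
    simp [hi.1, hi.2]

/-! ### Integrability of the edge product -/

lemma measurable_edgeProd (E : Finset (Fin v × Fin v)) {W : ℝ → ℝ → ℝ}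
    (hWm : Measurable fun z : ℝ × ℝ => W z.1 z.2) : Measurable (edgeProd E W) := by
  unfold edgeProd
  refine Finset.measurable_prod _ fun e _ => ?_
  exact hWm.comp (g := fun z : ℝ × ℝ => W z.1 z.2) (f := fun x : Fin v → ℝ => (x e.1, x e.2))
    (by fun_prop)

/-- By Finner's inequality the edge product lies in `L^q` as soon as `W` lies in `L^{qΔ}`. -/
lemma memLp_edgeProd (E : Finset (Fin v × Fin v)) (hE : ∀ e ∈ E, e.1 ≠ e.2) {q : ℝ} (hq : 1 < q)
    {W : ℝ → ℝ → ℝ} (hWm : Measurable fun z : ℝ × ℝ => W z.1 z.2)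
    (hWnorm : eLpNorm (fun z : ℝ × ℝ => W z.1 z.2)
      (ENNReal.ofReal (q * (maxDeg E : ℝ))) unifSq < ⊤) :
    MemLp (edgeProd E W) (ENNReal.ofReal q) (unifCube v) := by
  refine ⟨(measurable_edgeProd E hWm).aestronglyMeasurable, ?_⟩
  rcases E.eq_empty_or_nonempty with rfl | ⟨e₀, he₀⟩
  · have : edgeProd (∅ : Finset (Fin v × Fin v)) W = fun _ => (1:ℝ) := by ext; simp [edgeProd]
    rw [this]
    exact (memLp_const (1:ℝ)).2
  have hcard : ∀ a, (E.filter fun e => a ∈ ({e.1, e.2} : Finset (Fin v))).card ≤ maxDeg E := by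
    intro a
    refine le_trans (le_of_eq ?_) (Finset.le_sup (f := fun a =>
      (E.filter fun e => e.1 = a ∨ e.2 = a).card) (Finset.mem_univ a))
    congr 1
    ext e
    simp [eq_comm]
  set D := maxDeg E with hDdef
  have hD : 0 < D := by
    refine lt_of_lt_of_le (Finset.card_pos.2 ⟨e₀, ?_⟩) (hcard e₀.1)
    simp [he₀]
  have hD' : (0:ℝ) < D := by exact_mod_cast hD
  have hq0 : 0 < q := by linarith
  have hqD : 0 < q * D := by positivity
  have hWfin : ∫⁻ z, ‖W z.1 z.2‖ₑ ^ (q * D) ∂unifSq < ⊤ := by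
    have := lintegral_rpow_enorm_lt_top_of_eLpNorm_lt_top
      (by simpa using hqD) ENNReal.ofReal_ne_top hWnorm
    rwa [ENNReal.toReal_ofReal hqD.le] at this
  rw [eLpNorm_lt_top_iff_lintegral_rpow_enorm_lt_top (by simpa using hq0) ENNReal.ofReal_ne_top,
    ENNReal.toReal_ofReal hq0.le]
  -- Finner's inequality is applied to the `qΔ`-th powers of the factors.
  let F : Fin v × Fin v → (Fin v → ℝ) → ℝ≥0∞ := fun e z => ‖W (z e.1) (z e.2)‖ₑ ^ (q * D)
  have hF : ∀ e, Measurable (F e) := fun e =>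
    ((hWm.comp (g := fun z : ℝ × ℝ => W z.1 z.2) (f := fun x : Fin v → ℝ => (x e.1, x e.2))
      (by fun_prop)).enorm).pow_const _
  have key := lmarginal_finner (fun _ : Fin v => unif) E F hF (fun e => {e.1, e.2})
    (by
      intro e a ha x y
      simp only [Finset.mem_insert, Finset.mem_singleton, not_or] at ha
      simp only [F]
      rw [Function.update_of_ne (Ne.symm ha.1), Function.update_of_ne (Ne.symm ha.2)])
    D hD hcard Finset.univ 0
  simp only [lmarginal_univ] at key
  have h1 : ∀ z, ‖edgeProd E W z‖ₑ ^ q = ∏ e ∈ E, F e z ^ (1 / (D:ℝ)) := by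
    intro z
    simp only [edgeProd, F, ← ENNReal.rpow_mul]
    have : q * D * (1 / D) = q := by field_simp
    rw [this, ENNReal.prod_rpow_of_nonneg hq0.le]
    congr 1
    simp only [enorm_eq_nnnorm, nnnorm_prod, ENNReal.ofNNReal_finsetProd]
  simp only [h1]
  refine lt_of_le_of_lt key ?_
  refine ENNReal.prod_lt_top fun e he => ENNReal.rpow_lt_top_of_nonneg (by positivity) ?_
  have h2 := (measurePreserving_pair (hE e he)).lintegral_comp
    (f := fun z : ℝ × ℝ => ‖W z.1 z.2‖ₑ ^ (q * D)) (hWm.enorm.pow_const _)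
  change ∫⁻ z, ‖W (z e.1) (z e.2)‖ₑ ^ (q * D) ∂(unifCube v) ≠ ⊤
  rw [h2]
  exact hWfin.ne

/-- The edge product times `∏ u(x_a)` is integrable for `u ∈ L^p`, by Hölder's inequality. -/
lemma integrable_edgeProd_mul {E : Finset (Fin v × Fin v)} {W : ℝ → ℝ → ℝ} {p q : ℝ}
    (hq : 1 < q) (hp : 1 ≤ p) (hpq : 1/p + 1/q ≤ 1)
    (hP : MemLp (edgeProd E W) (ENNReal.ofReal q) (unifCube v))
    {u : ℝ → ℝ} (hu : MemLp u (ENNReal.ofReal p) unif) :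
    Integrable (fun z => edgeProd E W z * ∏ a, u (z a)) (unifCube v) := by
  have hp0 : 0 < p := by linarith
  have hU : MemLp (fun z : Fin v → ℝ => ∏ a, u (z a)) (ENNReal.ofReal p) (unifCube v) := by
    have hmeas : AEStronglyMeasurable (fun z : Fin v → ℝ => ∏ a, u (z a)) (unifCube v) := by
      refine Finset.aestronglyMeasurable_fun_prod _ fun a _ => ?_
      exact hu.1.comp_measurePreserving (measurePreserving_eval (fun _ : Fin v => unif) a)
    rw [← integrable_norm_rpow_iff hmeas (by simpa using hp0) ENNReal.ofReal_ne_top,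
      ENNReal.toReal_ofReal hp0.le]
    have h1 := hu.integrable_norm_rpow (by simpa using hp0) ENNReal.ofReal_ne_top
    rw [ENNReal.toReal_ofReal hp0.le] at h1
    have h2 := Integrable.fintype_prod (ι := Fin v) (f := fun _ x => ‖u x‖ ^ p)
      (μ := fun _ => unif) (fun _ => h1)
    refine h2.congr (Eventually.of_forall fun z => ?_)
    simp only [norm_prod]
    exact Real.finsetProd_rpow _ _ (fun _ _ => norm_nonneg _) p
  have hconj : q.HolderConjugate (q.conjExponent) := Real.HolderConjugate.conjExponent hq
  have hle : q.conjExponent ≤ p := by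
    have h1 := hconj.symm.one_sub_inv
    have h2 : p⁻¹ ≤ (q.conjExponent)⁻¹ := by
      have := hconj.inv_add_inv_eq_one
      simp only [one_div] at hpq
      linarith
    exact (inv_le_inv₀ hp0 hconj.symm.pos).1 h2
  have hU' := hU.mono_exponent (ENNReal.ofReal_le_ofReal hle)
  have : ENNReal.HolderConjugate (ENNReal.ofReal q) (ENNReal.ofReal q.conjExponent) :=
    hconj.ennrealOfReal
  exact hP.integrable_mul hU'

/-! ### The directional derivative of `G_W` -/

/-- The product `d(x_a) ∏_{b ≠ a} f(x_b)`. -/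
def dprod (f d : ℝ → ℝ) (a : Fin v) (z : Fin v → ℝ) : ℝ :=
  d (z a) * ∏ b ∈ Finset.univ.erase a, f (z b)

lemma measurable_dprod {f d : ℝ → ℝ} (hf : Measurable f) (hd : Measurable d) (a : Fin v) :
    Measurable (dprod f d a) := by
  unfold dprod
  refine (hd.comp (measurable_pi_apply a)).mul ?_
  exact Finset.measurable_prod _ fun b _ => hf.comp (measurable_pi_apply b)

lemma abs_dprod_le {f d u : ℝ → ℝ} (hfu : ∀ x, |f x| ≤ u x) (hdu : ∀ x, |d x| ≤ u x)
    (a : Fin v) (z : Fin v → ℝ) : |dprod f d a z| ≤ ∏ b, u (z b) := by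
  unfold dprod
  rw [abs_mul, Finset.abs_prod, ← Finset.mul_prod_erase Finset.univ _ (Finset.mem_univ a)]
  refine mul_le_mul (hdu _) ?_ (Finset.prod_nonneg fun _ _ => abs_nonneg _)
    ((abs_nonneg _).trans (hdu _))
  exact Finset.prod_le_prod (fun _ _ => abs_nonneg _) fun _ _ => hfu _

/-- The hypotheses on the kernel `W` and the exponent `p` used in the sequel: `W` is measurable and
the edge product may be integrated against products of `L^p` functions. -/
structure Admissible (E : Finset (Fin v × Fin v)) (W : ℝ → ℝ → ℝ) (p : ℝ) : Prop where
  meas : Measurable fun z : ℝ × ℝ => W z.1 z.2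
  int : ∀ u : ℝ → ℝ, MemLp u (ENNReal.ofReal p) unif →
    Integrable (fun z => edgeProd E W z * ∏ a, u (z a)) (unifCube v)

lemma Admissible.integrable_dprod {E : Finset (Fin v × Fin v)} {W : ℝ → ℝ → ℝ} {p : ℝ}
    (hW : Admissible E W p) {f d : ℝ → ℝ} (hf : Measurable f) (hd : Measurable d)
    (hfp : MemLp f (ENNReal.ofReal p) unif) (hdp : MemLp d (ENNReal.ofReal p) unif) (a : Fin v) :
    Integrable (fun z => edgeProd E W z * dprod f d a z) (unifCube v) := by
  refine (hW.int (fun x => |f x| + |d x|) (hfp.abs.add hdp.abs)).mono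
    ((measurable_edgeProd E hW.meas).mul (measurable_dprod hf hd a)).aestronglyMeasurable
    (Eventually.of_forall fun z => ?_)
  simp only [norm_mul, Real.norm_eq_abs]
  refine mul_le_mul_of_nonneg_left ?_ (abs_nonneg _)
  refine (abs_dprod_le (u := fun x => |f x| + |d x|) (fun x => ?_) (fun x => ?_) a z).trans (le_abs_self _)
  · linarith [abs_nonneg (d x)]
  · linarith [abs_nonneg (f x)]

/-- Differentiation of `G_W` along a line, by dominated convergence. -/
lemma Admissible.hasDerivAt_GW {E : Finset (Fin v × Fin v)} {W : ℝ → ℝ → ℝ} {p : ℝ}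
    (hW : Admissible E W p) {f d : ℝ → ℝ} (hf : Measurable f) (hd : Measurable d)
    (hfp : MemLp f (ENNReal.ofReal p) unif) (hdp : MemLp d (ENNReal.ofReal p) unif) :
    HasDerivAt (fun s : ℝ => GW E W (fun x => f x + s * d x))
      (∑ a, ∫ z, edgeProd E W z * dprod f d a z ∂(unifCube v)) 0 := by
  have hu : MemLp (fun x => |f x| + |d x|) (ENNReal.ofReal p) unif := hfp.abs.add hdp.abs
  have hmf : ∀ s : ℝ, Measurable (fun x => f x + s * d x) := fun s => hf.add (hd.const_mul s)
  have hP := measurable_edgeProd E hW.meas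
  have h := (hasDerivAt_integral_of_dominated_loc_of_deriv_le (𝕜 := ℝ) (μ := unifCube v)
    (x₀ := (0:ℝ)) (s := Metric.ball 0 1)
    (F := fun s z => edgeProd E W z * ∏ a, (f (z a) + s * d (z a)))
    (F' := fun s z => edgeProd E W z * ∑ a, dprod (fun x => f x + s * d x) d a z)
    (bound := fun z => v * |edgeProd E W z * ∏ a, (|f (z a)| + |d (z a)|)|)
    (Metric.ball_mem_nhds _ one_pos) ?_ ?_ ?_ ?_ ?_ ?_).2
  · have h2 : ∑ a, ∫ z, edgeProd E W z * dprod f d a z ∂(unifCube v)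
        = ∫ z, edgeProd E W z * ∑ a, dprod (fun x => f x + 0 * d x) d a z ∂(unifCube v) := by
      simp only [zero_mul, add_zero, Finset.mul_sum]
      rw [integral_finsetSum _ fun a _ => hW.integrable_dprod hf hd hfp hdp a]
    rw [h2]
    exact h
  · refine Eventually.of_forall fun s => (hP.mul ?_).aestronglyMeasurable
    exact Finset.measurable_prod _ fun a _ => (hmf s).comp (measurable_pi_apply a)
  · simpa using hW.int f hfp
  · refine (hP.mul ?_).aestronglyMeasurable
    exact Finset.measurable_sum _ fun a _ => measurable_dprod (hmf 0) hd a
  · refine Eventually.of_forall fun z s hs => ?_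
    have hs1 : |s| ≤ 1 := by
      have := mem_ball_zero_iff.1 hs
      rw [Real.norm_eq_abs] at this
      exact this.le
    rw [norm_mul, abs_mul, Real.norm_eq_abs, Real.norm_eq_abs, mul_left_comm]
    gcongr
    refine (Finset.abs_sum_le_sum_abs _ _).trans ?_
    refine (Finset.sum_le_card_nsmul _ _ (|∏ a, (|f (z a)| + |d (z a)|)|) fun a _ => ?_).trans ?_
    · refine (abs_dprod_le (u := fun x => |f x| + |d x|) (fun x => ?_) (fun x => ?_) a z).trans
        (le_abs_self _)
      · refine (abs_add_le _ _).trans ?_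
        rw [abs_mul]
        nlinarith [abs_nonneg (d x)]
      · linarith [abs_nonneg (f x)]
    · simp
  · exact ((hW.int _ hu).abs).const_mul _
  · refine Eventually.of_forall fun z s _ => ?_
    refine HasDerivAt.const_mul _ ?_
    have := HasDerivAt.fun_finsetProd (u := (Finset.univ : Finset (Fin v))) (x := s)
      (f := fun a s => f (z a) + s * d (z a)) (f' := fun a => d (z a)) (fun a _ => by
        simpa using ((hasDerivAt_id s).mul_const (d (z a))).const_add (f (z a)))
    simpa [dprod, mul_comm] using this

/-! ### Symmetrization -/

lemma symW_eq (E : Finset (Fin v × Fin v)) (W : ℝ → ℝ → ℝ) (z : Fin v → ℝ) :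
    symW E W z = (v.factorial : ℝ)⁻¹ * ∑ σ : Equiv.Perm (Fin v), edgeProd E W (z ∘ σ) := rfl

lemma measurable_symW (E : Finset (Fin v × Fin v)) {W : ℝ → ℝ → ℝ}
    (hWm : Measurable fun z : ℝ × ℝ => W z.1 z.2) : Measurable (symW E W) := by
  have : symW E W = fun z => (v.factorial : ℝ)⁻¹ *
      ∑ σ : Equiv.Perm (Fin v), edgeProd E W (z ∘ σ) := rfl
  rw [this]
  refine Measurable.const_mul ?_ _
  exact Finset.measurable_sum _ fun σ _ =>
    (measurable_edgeProd E hWm).comp (measurePreserving_perm σ).measurable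

lemma dprod_perm (f d : ℝ → ℝ) (a : Fin v) (σ : Equiv.Perm (Fin v)) (z : Fin v → ℝ) :
    dprod f d (σ.symm a) (z ∘ σ) = dprod f d a z := by
  unfold dprod
  simp only [Function.comp, Equiv.apply_symm_apply]
  congr 1
  refine Finset.prod_bij (fun b _ => σ b) ?_ ?_ ?_ ?_
  · intro b hb
    simp only [Finset.mem_erase, Finset.mem_univ, and_true] at hb ⊢
    rintro rfl
    simp at hb
  · intro b _ c _ h
    exact σ.injective h
  · intro b hb
    refine ⟨σ.symm b, ?_, by simp⟩
    simp only [Finset.mem_erase, Finset.mem_univ, and_true] at hb ⊢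
    exact fun h => hb (σ.symm.injective h)
  · intro b _
    rfl

lemma Admissible.integrable_perm {E : Finset (Fin v × Fin v)} {W : ℝ → ℝ → ℝ} {p : ℝ}
    (hW : Admissible E W p) {f d : ℝ → ℝ} (hf : Measurable f) (hd : Measurable d)
    (hfp : MemLp f (ENNReal.ofReal p) unif) (hdp : MemLp d (ENNReal.ofReal p) unif) (a : Fin v)
    (σ : Equiv.Perm (Fin v)) :
    Integrable (fun z => edgeProd E W (z ∘ σ) * dprod f d a z) (unifCube v) := by
  have h := (measurePreserving_perm σ).integrable_comp_of_integrable
    (hW.integrable_dprod hf hd hfp hdp (σ.symm a))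
  refine h.congr (Eventually.of_forall fun z => ?_)
  simp only [Function.comp_def]
  rw [← dprod_perm f d a σ z]
  rfl

lemma Admissible.integral_perm {E : Finset (Fin v × Fin v)} {W : ℝ → ℝ → ℝ} {p : ℝ}
    (hW : Admissible E W p) {f d : ℝ → ℝ} (hf : Measurable f) (hd : Measurable d) (a : Fin v)
    (σ : Equiv.Perm (Fin v)) :
    ∫ z, edgeProd E W (z ∘ σ) * dprod f d a z ∂(unifCube v)
      = ∫ z, edgeProd E W z * dprod f d (σ.symm a) z ∂(unifCube v) := by
  have h1 : ∫ z, edgeProd E W z * dprod f d (σ.symm a) z ∂((unifCube v).map (fun z => z ∘ σ))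
      = ∫ z, edgeProd E W (z ∘ σ) * dprod f d (σ.symm a) (z ∘ σ) ∂(unifCube v) :=
    integral_map (measurePreserving_perm σ).measurable.aemeasurable
      ((measurable_edgeProd E hW.meas).mul (measurable_dprod hf hd _)).aestronglyMeasurable
  rw [(measurePreserving_perm σ).map_eq] at h1
  rw [h1]
  simp only [dprod_perm]

lemma Admissible.integrable_symW {E : Finset (Fin v × Fin v)} {W : ℝ → ℝ → ℝ} {p : ℝ}
    (hW : Admissible E W p) {f d : ℝ → ℝ} (hf : Measurable f) (hd : Measurable d)
    (hfp : MemLp f (ENNReal.ofReal p) unif) (hdp : MemLp d (ENNReal.ofReal p) unif) (a : Fin v) :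
    Integrable (fun z => symW E W z * dprod f d a z) (unifCube v) := by
  have : (fun z => symW E W z * dprod f d a z) = fun z => (v.factorial : ℝ)⁻¹ *
      ∑ σ : Equiv.Perm (Fin v), edgeProd E W (z ∘ σ) * dprod f d a z := by
    ext z
    rw [symW_eq, mul_assoc, Finset.sum_mul]
  rw [this]
  exact (integrable_finsetSum _ fun σ _ =>
    hW.integrable_perm hf hd hfp hdp a σ).const_mul _

/-- A sum over permutations of a function of the preimage of `a` is `(v-1)!` times the sum over
all points. -/
lemma sum_perm_symm (I : Fin v → ℝ) (a : Fin v) :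
    (v : ℝ) * ∑ σ : Equiv.Perm (Fin v), I (σ.symm a) = v.factorial * ∑ b, I b := by
  have h1 : ∀ b : Fin v, ∑ σ : Equiv.Perm (Fin v), I (σ.symm b)
      = ∑ σ : Equiv.Perm (Fin v), I (σ.symm a) := by
    intro b
    refine Fintype.sum_equiv (Equiv.mulLeft (Equiv.swap a b)) _ _ fun σ => ?_
    congr 1
    rw [Equiv.symm_apply_eq, Equiv.coe_mulLeft]
    change b = σ (σ.symm ((Equiv.swap a b).symm a))
    simp
  have h2 : ∑ b : Fin v, ∑ σ : Equiv.Perm (Fin v), I (σ.symm b)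
      = (v : ℝ) * ∑ σ : Equiv.Perm (Fin v), I (σ.symm a) := by
    rw [Finset.sum_congr rfl fun b _ => h1 b]
    simp
  rw [← h2, Finset.sum_comm]
  have h3 : ∀ σ : Equiv.Perm (Fin v), ∑ b, I (σ.symm b) = ∑ b, I b := fun σ =>
    Equiv.sum_comp σ.symm I
  simp [h3, Fintype.card_perm]

lemma Admissible.integral_symW {E : Finset (Fin v × Fin v)} {W : ℝ → ℝ → ℝ} {p : ℝ}
    (hW : Admissible E W p) {f d : ℝ → ℝ} (hf : Measurable f) (hd : Measurable d)
    (hfp : MemLp f (ENNReal.ofReal p) unif) (hdp : MemLp d (ENNReal.ofReal p) unif) (a : Fin v) :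
    (v : ℝ) * ∫ z, symW E W z * dprod f d a z ∂(unifCube v)
      = ∑ b, ∫ z, edgeProd E W z * dprod f d b z ∂(unifCube v) := by
  have : (fun z => symW E W z * dprod f d a z) = fun z => (v.factorial : ℝ)⁻¹ *
      ∑ σ : Equiv.Perm (Fin v), edgeProd E W (z ∘ σ) * dprod f d a z := by
    ext z
    rw [symW_eq, mul_assoc, Finset.sum_mul]
  rw [this, integral_const_mul,
    integral_finsetSum _ fun σ _ => hW.integrable_perm hf hd hfp hdp a σ,
    Finset.sum_congr rfl fun σ _ => hW.integral_perm hf hd a σ, mul_left_comm,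
    sum_perm_symm (fun b => ∫ z, edgeProd E W z * dprod f d b z ∂(unifCube v)) a]
  have : (v.factorial : ℝ) ≠ 0 := by exact_mod_cast v.factorial_ne_zero
  rw [inv_mul_cancel_left₀ this]

lemma dprod_update [NeZero v] (f d : ℝ → ℝ) (z : Fin v → ℝ) (x : ℝ) :
    dprod f d 0 (Function.update z 0 x)
      = d x * ∏ a ∈ Finset.univ.erase (0 : Fin v), f (z a) := by
  unfold dprod
  rw [Function.update_self]
  congr 1
  refine Finset.prod_congr rfl fun b hb => ?_
  rw [Function.update_of_ne (Finset.ne_of_mem_erase hb)]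

lemma Admissible.integrable_prod [NeZero v] {E : Finset (Fin v × Fin v)} {W : ℝ → ℝ → ℝ} {p : ℝ}
    (hW : Admissible E W p) {f d : ℝ → ℝ} (hf : Measurable f) (hd : Measurable d)
    (hfp : MemLp f (ENNReal.ofReal p) unif) (hdp : MemLp d (ENNReal.ofReal p) unif) :
    Integrable (fun w : ℝ × (Fin v → ℝ) => d w.1 * (symW E W (Function.update w.2 0 w.1) *
      ∏ a ∈ Finset.univ.erase (0 : Fin v), f (w.2 a))) (unif.prod (unifCube v)) := by
  have h := (measurePreserving_update (0 : Fin v)).integrable_comp_of_integrable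
    (hW.integrable_symW hf hd hfp hdp 0)
  refine h.congr (Eventually.of_forall fun w => ?_)
  simp only [Function.comp_def, dprod_update]
  ring

lemma Admissible.integrable_symWf [NeZero v] {E : Finset (Fin v × Fin v)} {W : ℝ → ℝ → ℝ} {p : ℝ}
    (hW : Admissible E W p) {f d : ℝ → ℝ} (hf : Measurable f) (hd : Measurable d)
    (hfp : MemLp f (ENNReal.ofReal p) unif) (hdp : MemLp d (ENNReal.ofReal p) unif) :
    Integrable (fun x => d x * symWf E W f x) unif := by
  have := (hW.integrable_prod hf hd hfp hdp).integral_prod_left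
  simp only [integral_const_mul] at this
  exact this

/-- The derivative of `G_W` in direction `d` is `v ∫ d(x) symWf(x) dx`: by Fubini and symmetry. -/
lemma Admissible.integral_symWf [NeZero v] {E : Finset (Fin v × Fin v)} {W : ℝ → ℝ → ℝ} {p : ℝ}
    (hW : Admissible E W p) {f d : ℝ → ℝ} (hf : Measurable f) (hd : Measurable d)
    (hfp : MemLp f (ENNReal.ofReal p) unif) (hdp : MemLp d (ENNReal.ofReal p) unif) :
    ∑ b, ∫ z, edgeProd E W z * dprod f d b z ∂(unifCube v)
      = v * ∫ x, d x * symWf E W f x ∂unif := by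
  rw [← hW.integral_symW hf hd hfp hdp 0]
  congr 1
  have h1 := integral_map (μ := unif.prod (unifCube v))
    (f := fun z => symW E W z * dprod f d 0 z)
    (measurePreserving_update (0 : Fin v)).measurable.aemeasurable
    ((measurable_symW E hW.meas).mul (measurable_dprod hf hd 0)).aestronglyMeasurable
  rw [(measurePreserving_update (0 : Fin v)).map_eq] at h1
  rw [h1]
  have h2 := integral_prod _ (hW.integrable_prod hf hd hfp hdp)
  simp only [integral_const_mul] at h2
  change _ = ∫ x, d x * ∫ z, _ ∂(unifCube v) ∂unif
  rw [← h2]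
  congr 1
  ext w
  rw [dprod_update]
  ring

lemma measurable_symWf [NeZero v] (E : Finset (Fin v × Fin v)) {W : ℝ → ℝ → ℝ}
    (hWm : Measurable fun z : ℝ × ℝ => W z.1 z.2) {f : ℝ → ℝ} (hf : Measurable f) :
    Measurable (symWf E W f) := by
  have : Measurable (fun w : ℝ × (Fin v → ℝ) => symW E W (Function.update w.2 0 w.1) *
      ∏ a ∈ Finset.univ.erase (0 : Fin v), f (w.2 a)) := by
    refine ((measurable_symW E hWm).comp (measurePreserving_update 0).measurable).mul ?_
    exact Finset.measurable_prod _ fun a _ =>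
      hf.comp ((measurable_pi_apply a).comp measurable_snd)
  exact (this.stronglyMeasurable.integral_prod_right (ν := unifCube v)).measurable

/-- `T[Sym[W]]` is finite almost everywhere. -/
lemma Admissible.ae_lt_top [NeZero v] {E : Finset (Fin v × Fin v)} {W : ℝ → ℝ → ℝ} {p : ℝ}
    (hW : Admissible E W p) : ∀ᵐ x ∂unif,
      (∫⁻ z, ENNReal.ofReal |symW E W (Function.update z 0 x)| ∂(unifCube v)) < ⊤ := by
  have h := hW.integrable_prod (f := fun _ => 1) (d := fun _ => 1) measurable_const
    measurable_const (memLp_const _) (memLp_const _)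
  simp only [Finset.prod_const_one, mul_one, one_mul] at h
  filter_upwards [h.prod_right_ae] with x hx
  have := hx.2
  rw [hasFiniteIntegral_iff_norm] at this
  simpa using this

/-! ### First-order optimality -/

lemma MemL.memLp {μ : Measure ℝ} {p : ℝ} (hp : 0 < p) {f : ℝ → ℝ} (hf : MemL μ p f) :
    MemLp f (ENNReal.ofReal p) unif := by
  refine ⟨hf.1.aestronglyMeasurable, ?_⟩
  rw [eLpNorm_lt_top_iff_lintegral_rpow_enorm_lt_top (by simpa using hp) ENNReal.ofReal_ne_top,
    ENNReal.toReal_ofReal hp.le]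
  refine lt_of_eq_of_lt (lintegral_congr fun x => ?_) hf.2.2
  rw [Real.enorm_eq_ofReal_abs, ENNReal.ofReal_rpow_of_nonneg (abs_nonneg _) hp.le]

lemma lintegral_abs_rpow_lt_top {p : ℝ} (hp : 0 < p) {f : ℝ → ℝ}
    (hf : MemLp f (ENNReal.ofReal p) unif) :
    (∫⁻ x in Icc (0:ℝ) 1, ENNReal.ofReal (|f x| ^ p)) < ⊤ := by
  have h := hf.2
  rw [eLpNorm_lt_top_iff_lintegral_rpow_enorm_lt_top (by simpa using hp) ENNReal.ofReal_ne_top,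
    ENNReal.toReal_ofReal hp.le] at h
  refine lt_of_eq_of_lt (lintegral_congr fun x => ?_) h
  rw [Real.enorm_eq_ofReal_abs, ENNReal.ofReal_rpow_of_nonneg (abs_nonneg _) hp.le]

/-- A maximizer `f` also maximizes the linearized functional: comparing `f` with `f + s (g - f)`,
bounding the entropy by convexity and letting `s ↓ 0`. -/
lemma IsMaximizer.linearized [NeZero v] {μ : Measure ℝ} [IsProbabilityMeasure μ] (hμ : ExpInt μ)
    {E : Finset (Fin v × Fin v)} {W : ℝ → ℝ → ℝ} {p : ℝ} (hp : 0 < p) (hW : Admissible E W p)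
    {θ : ℝ} {f g : ℝ → ℝ} (hf : IsMaximizer μ p E W θ f) (hg : MemL μ p g)
    (hgb : (∫⁻ x in Icc (0:ℝ) 1, gb μ (g x)) < ⊤) :
    θ * (v * ∫ x, (g x - f x) * symWf E W f x ∂unif)
      ≤ (∫⁻ x in Icc (0:ℝ) 1, gb μ (g x)).toReal - (∫⁻ x in Icc (0:ℝ) 1, gb μ (f x)).toReal := by
  obtain ⟨hfL, hfgb, hmax⟩ := hf
  have hfp := hfL.memLp hp
  have hgp := hg.memLp hp
  have hdp : MemLp (fun x => g x - f x) (ENNReal.ofReal p) unif := hgp.sub hfp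
  have hdm : Measurable (fun x => g x - f x) := hg.1.sub hfL.1
  have hder := (hW.hasDerivAt_GW hfL.1 hdm hfp hdp).const_mul θ
  rw [hW.integral_symWf hfL.1 hdm hfp hdp] at hder
  have hslope := hder.tendsto_slope_zero_right
  refine le_of_tendsto hslope ?_
  have hIoo : Ioo (0:ℝ) 1 ∈ nhdsWithin (0:ℝ) (Ioi 0) := Ioo_mem_nhdsGT one_pos
  filter_upwards [hIoo] with s hs
  set G : ℝ → ℝ := fun x => f x + s * (g x - f x) with hG
  set A := ∫⁻ x in Icc (0:ℝ) 1, gb μ (f x) with hA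
  set B := ∫⁻ x in Icc (0:ℝ) 1, gb μ (g x) with hB
  have hle : (∫⁻ x in Icc (0:ℝ) 1, gb μ (G x))
      ≤ ENNReal.ofReal (1 - s) * A + ENNReal.ofReal s * B := by
    have hmf : Measurable fun x => gb μ (f x) := (measurable_gb hμ).comp hfL.1
    have hmg : Measurable fun x => gb μ (g x) := (measurable_gb hμ).comp hg.1
    rw [hA, hB, ← lintegral_const_mul _ hmf, ← lintegral_const_mul _ hmg,
      ← lintegral_add_left (hmf.const_mul _)]
    refine setLIntegral_mono' measurableSet_Icc fun x hx => ?_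
    exact gb_convex hμ (hfL.2.1 x hx) (hg.2.1 x hx) hs.1 hs.2
  have hfin : ENNReal.ofReal (1 - s) * A + ENNReal.ofReal s * B < ⊤ :=
    ENNReal.add_lt_top.2 ⟨ENNReal.mul_lt_top ENNReal.ofReal_lt_top hfgb,
      ENNReal.mul_lt_top ENNReal.ofReal_lt_top hgb⟩
  have hGL : MemL μ p G := by
    refine ⟨hfL.1.add (hdm.const_mul s), fun x hx => ?_, ?_⟩
    · have := convex_closure_Ndom hμ (hfL.2.1 x hx) (hg.2.1 x hx)
        (by linarith [hs.2] : (0:ℝ) ≤ 1 - s) hs.1.le (by ring)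
      convert this using 1
      simp only [hG, smul_eq_mul]
      ring
    · exact lintegral_abs_rpow_lt_top hp (hfp.add (hdp.const_mul s))
  have h1 := hmax G hGL (hle.trans_lt hfin)
  have h2 := ENNReal.toReal_mono hfin.ne hle
  rw [ENNReal.toReal_add (ENNReal.mul_lt_top ENNReal.ofReal_lt_top hfgb).ne
      (ENNReal.mul_lt_top ENNReal.ofReal_lt_top hgb).ne, ENNReal.toReal_mul, ENNReal.toReal_mul,
      ENNReal.toReal_ofReal (by linarith [hs.2]), ENNReal.toReal_ofReal hs.1.le] at h2
  unfold objective at h1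
  rw [← hA] at h1
  simp only [zero_add, zero_mul, add_zero, smul_eq_mul]
  rw [inv_mul_le_iff₀ hs.1]
  change θ * GW E W G - θ * GW E W f ≤ _
  linarith

/-- The linearized problem decouples over `x`, and its pointwise maximizer is `α'(φ(x))`. -/
lemma IsMaximizer.ae_eq [NeZero v] {μ : Measure ℝ} [IsProbabilityMeasure μ] (hμ : ExpInt μ)
    {E : Finset (Fin v × Fin v)} {W : ℝ → ℝ → ℝ} {p : ℝ} (hp : 0 < p) (hW : Admissible E W p)
    {θ : ℝ} {f : ℝ → ℝ} (hf : IsMaximizer μ p E W θ f) :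
    ∀ᵐ x ∂unif, f x = cgf' μ (θ * v * symWf E W f x) := by
  classical
  have hfL := hf.1
  have hfgb := hf.2.1
  have hfp := hfL.memLp hp
  set φ : ℝ → ℝ := fun x => θ * v * symWf E W f x with hφ
  have hφm : Measurable φ := (measurable_symWf E hW.meas hfL.1).const_mul _
  have hgbm := measurable_gb hμ
  have hffin : ∀ᵐ x ∂unif, gb μ (f x) < ⊤ := ae_lt_top (hgbm.comp hfL.1) hfgb.ne
  -- Truncating to `|φ| ≤ n` makes the competitor bounded and of finite entropy.
  have main : ∀ n : ℕ, ∀ᵐ x ∂unif, |φ x| ≤ n → f x = cgf' μ (φ x) := by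
    intro n
    set A : Set ℝ := {x | |φ x| ≤ n} with hA
    have hAm : MeasurableSet A := measurableSet_le hφm.abs measurable_const
    set g : ℝ → ℝ := A.piecewise (fun x => cgf' μ (φ x)) f with hg
    have hgm : Measurable g := (hμ.continuous_cgf'.measurable.comp hφm).piecewise hAm hfL.1
    obtain ⟨C, hC⟩ := (isCompact_Icc (a := -(n:ℝ)) (b := n)).exists_bound_of_continuousOn
      hμ.continuous_cgf'.continuousOn
    have hγc : Continuous (gammaFn μ) :=
      (continuous_id.mul hμ.continuous_cgf').sub hμ.continuous_cgf
    obtain ⟨C', hC'⟩ := (isCompact_Icc (a := -(n:ℝ)) (b := n)).exists_bound_of_continuousOn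
      hγc.continuousOn
    have hgp : MemLp g (ENNReal.ofReal p) unif := by
      refine (hfp.abs.add (memLp_const |C|)).mono hgm.aestronglyMeasurable
        (Eventually.of_forall fun x => ?_)
      simp only [Pi.add_apply, Real.norm_eq_abs]
      refine le_trans ?_ (le_abs_self _)
      change |g x| ≤ |f x| + |C|
      by_cases hx : x ∈ A
      · have := hC (φ x) (abs_le.1 hx)
        rw [Real.norm_eq_abs] at this
        rw [hg, piecewise_eq_of_mem _ _ _ hx]
        linarith [abs_nonneg (f x), le_abs_self C]
      · rw [hg, piecewise_eq_of_notMem _ _ _ hx]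
        linarith [abs_nonneg C]
    have hgL : MemL μ p g := by
      refine ⟨hgm, fun x hx => ?_, lintegral_abs_rpow_lt_top hp hgp⟩
      by_cases hxA : x ∈ A
      · rw [hg, piecewise_eq_of_mem _ _ _ hxA]
        exact subset_closure ⟨_, rfl⟩
      · rw [hg, piecewise_eq_of_notMem _ _ _ hxA]
        exact hfL.2.1 x hx
    have hggb : (∫⁻ x in Icc (0:ℝ) 1, gb μ (g x)) < ⊤ := by
      have : ∀ x, gb μ (g x) ≤ gb μ (f x) + ENNReal.ofReal C' := by
        intro x
        by_cases hxA : x ∈ A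
        · rw [hg, piecewise_eq_of_mem _ _ _ hxA, gb_cgf' hμ]
          refine le_trans (ENNReal.ofReal_le_ofReal ?_) le_add_self
          exact (le_abs_self _).trans (hC' (φ x) (abs_le.1 hxA))
        · rw [hg, piecewise_eq_of_notMem _ _ _ hxA]
          exact le_self_add
      refine lt_of_le_of_lt (lintegral_mono this) ?_
      rw [lintegral_add_right _ measurable_const, lintegral_const]
      exact ENNReal.add_lt_top.2 ⟨hfgb, ENNReal.mul_lt_top ENNReal.ofReal_lt_top (by simp)⟩
    have hlin := hf.linearized hμ hp hW hgL hggb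
    have hgfin : ∀ᵐ x ∂unif, gb μ (g x) < ⊤ := ae_lt_top (hgbm.comp hgm) hggb.ne
    have hmg : Measurable fun x => gb μ (g x) := hgbm.comp hgm
    have hmf : Measurable fun x => gb μ (f x) := hgbm.comp hfL.1
    rw [← integral_toReal hmg.aemeasurable hgfin,
      ← integral_toReal hmf.aemeasurable hffin] at hlin
    have hi1 : Integrable (fun x => (gb μ (g x)).toReal) unif :=
      integrable_toReal_of_lintegral_ne_top (hgbm.comp hgm).aemeasurable hggb.ne
    have hi2 : Integrable (fun x => (gb μ (f x)).toReal) unif :=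
      integrable_toReal_of_lintegral_ne_top (hgbm.comp hfL.1).aemeasurable hfgb.ne
    have hi3 : Integrable (fun x => φ x * (g x - f x)) unif := by
      refine ((hW.integrable_symWf hfL.1 (hgm.sub hfL.1) hfp (hgp.sub hfp)).const_mul
        (θ * v)).congr (Eventually.of_forall fun x => ?_)
      simp only [hφ, Pi.sub_apply]
      ring
    have he3 : θ * (v * ∫ x, (g x - f x) * symWf E W f x ∂unif)
        = ∫ x, φ x * (g x - f x) ∂unif := by
      rw [← mul_assoc, ← integral_const_mul]
      congr 1
      ext x
      simp only [hφ]
      ring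
    rw [he3] at hlin
    let k : ℝ → ℝ := fun x => φ x * (g x - f x) - (gb μ (g x)).toReal + (gb μ (f x)).toReal
    have hki : Integrable k unif := (hi3.sub hi1).add hi2
    have hkint : ∫ x, k x ∂unif ≤ 0 := by
      have : ∫ x, k x ∂unif = ∫ x, φ x * (g x - f x) ∂unif - ∫ x, (gb μ (g x)).toReal ∂unif
          + ∫ x, (gb μ (f x)).toReal ∂unif := by
        rw [← integral_sub hi3 hi1]
        exact integral_add (hi3.sub hi1) hi2
      rw [this]
      linarith
    have hk0 : 0 ≤ᵐ[unif] k := by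
      filter_upwards [hffin] with x hx
      simp only [k, Pi.zero_apply]
      by_cases hxA : x ∈ A
      · rw [hg, piecewise_eq_of_mem _ _ _ hxA, gb_cgf'_toReal hμ]
        have := hμ.le_gb_toReal hx.ne (φ x)
        linarith
      · rw [hg, piecewise_eq_of_notMem _ _ _ hxA]
        simp
    have hkz := (integral_eq_zero_iff_of_nonneg_ae hk0 hki).1
      (le_antisymm hkint (integral_nonneg_of_ae hk0))
    filter_upwards [hkz, hffin] with x hx hxf hxA
    have hxA' : x ∈ A := hxA
    simp only [k, Pi.zero_apply] at hx
    rw [hg, piecewise_eq_of_mem _ _ _ hxA', gb_cgf'_toReal hμ] at hx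
    exact eq_cgf'_of_le hμ hxf.ne (by linarith)
  filter_upwards [ae_all_iff.2 main] with x hx
  obtain ⟨n, hn⟩ := exists_nat_ge |φ x|
  exact hx n hn

/-- first-order conditions for the variational problem.
`T[Sym[W]]` is a.e. finite, and every maximizer `f` of the variational problem satisfies
`f(x) = α'(θ v ∫ Sym[W](x,x₂,…,x_v) ∏_{a=2}^v f(x_a))` for a.e. `x ∈ [0,1]`. -/
theorem statement0
    (μ : Measure ℝ) [IsProbabilityMeasure μ] (hND : Nondeg μ)
    (v : ℕ) [NeZero v] (hv : 2 ≤ v)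
    (E : Finset (Fin v × Fin v)) (hE : ∀ e ∈ E, e.1 ≠ e.2)
    (p : ℝ) (hpv : (v : ℝ) ≤ p) (htail : TailCond μ p)
    (q : ℝ) (hq : 1 < q) (hpq : 1/p + 1/q ≤ 1)
    (W : ℝ → ℝ → ℝ) (hWm : Measurable fun z : ℝ × ℝ => W z.1 z.2)
    (hWsym : ∀ x y, W x y = W y x)
    (hWnorm : eLpNorm (fun z : ℝ × ℝ => W z.1 z.2)
      (ENNReal.ofReal (q * (maxDeg E : ℝ))) unifSq < ⊤)
    (θ : ℝ) :
    (∀ᵐ x ∂(volume.restrict (Icc (0:ℝ) 1)),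
      (∫⁻ z, ENNReal.ofReal |symW E W (Function.update z 0 x)| ∂(unifCube v)) < ⊤) ∧
    (∀ f : ℝ → ℝ, IsMaximizer μ p E W θ f →
      ∀ᵐ x ∂(volume.restrict (Icc (0:ℝ) 1)),
        f x = cgf' μ (θ * v * symWf E W f x)) := by
  have hv' : (2:ℝ) ≤ v := by exact_mod_cast hv
  have hp1 : 1 ≤ p := by linarith
  have hμ : ExpInt μ := integrable_exp_mul hp1 htail
  have hW : Admissible E W p := ⟨hWm, fun u hu =>
    integrable_edgeProd_mul hq hp1 hpq (memLp_edgeProd E hE hq hWm hWnorm) hu⟩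
  exact ⟨hW.ae_lt_top, fun f hf => hf.ae_eq hμ (by linarith) hW⟩

end GibbsMulti
end
end

section
/- Let ν be a probability measure on ℝ symmetric about 0 and satisfying E_ν[exp(λ|X|^p)] < ∞ for all λ > 0 with some p ∈ [1,∞], and let B ≥ 0. Define μ as the B-exponential tilt of ν, i.e. dμ/dν(x) = exp(Bx − α_ν(B)) where α_ν(θ) := log ∫ e^{θx} dν(x). Then μ is stochastically non-negative: for every t > 0 with −t ∈ N one has t ∈ N and γ(β(t)) ≤ γ(β(−t)), where N, β, γ are the objects associated to μ. -/
/-!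
Write `a = cgf ν`; the tail condition makes it finite and differentiable everywhere. The tilt shifts
it: `cgf μ θ = a (θ + B) - a B`, so `cgf' μ θ = a' (θ + B)`, and by symmetry `a` is even and `a'` is
odd. Hence the range of `cgf' μ` is symmetric. If `a' (s + B) = t` and `a' (r + B) = -t`, put
`u = s + B` and `v = -(r + B)`. Then `a' u = a' v = t`, and
`γ(s) = (u t - a u) - B t + a B` while `γ(r) = (v t - a v) + B t + a B`. The tangent-line inequality
for the convex function `a` (`cgf_tangent_le`) gives `u t - a u ≤ v t - a v`, so `γ(s) ≤ γ(r)`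
because `B t ≥ 0`. Strict convexity is never used, so degenerate `ν` needs no separate treatment.
-/

open MeasureTheory Filter Set
open scoped ENNReal NNReal

noncomputable section

namespace GibbsMulti

lemma integrable_exp_mul_of_tailCond {ν : Measure ℝ} [IsProbabilityMeasure ν] {p : ℝ} (hp : 1 ≤ p)
    (htail : TailCond ν p) (θ : ℝ) : Integrable (fun x => Real.exp (θ * x)) ν := by
  have hl : 0 < |θ| + 1 := by positivity
  refine ((htail _ hl).const_mul (Real.exp (|θ| + 1))).mono' (by fun_prop) (ae_of_all _ fun x => ?_)
  rw [Real.norm_eq_abs, Real.abs_exp, ← Real.exp_add, Real.exp_le_exp]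
  have h1 : |x| ≤ 1 + |x| ^ p := by
    rcases le_total |x| 1 with h | h
    · have := Real.rpow_nonneg (abs_nonneg x) p
      linarith
    · have := Real.self_le_rpow_of_one_le h hp
      linarith
  calc θ * x ≤ |θ * x| := le_abs_self _
    _ = |θ| * |x| := abs_mul _ _
    _ ≤ (|θ| + 1) * (1 + |x| ^ p) := by gcongr; linarith
    _ = _ := by ring

lemma mem_interior_integrableExpSet {ν : Measure ℝ}
    (hint : ∀ θ : ℝ, Integrable (fun x => Real.exp (θ * x)) ν) (θ : ℝ) :
    θ ∈ interior (ProbabilityTheory.integrableExpSet id ν) := by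
  have : ProbabilityTheory.integrableExpSet id ν = univ := eq_univ_of_forall hint
  simp [this]

/-- Tangent-line inequality for the log-mgf: with
`c = (v - u) * cgf' ν u`, integrate `e^{vx} ≥ e^{ux} e^c (1 + (v - u) x - c)`. -/
lemma cgf_tangent_le {ν : Measure ℝ} [IsProbabilityMeasure ν]
    (hint : ∀ θ : ℝ, Integrable (fun x => Real.exp (θ * x)) ν) (u v : ℝ) :
    cgf ν u + (v - u) * cgf' ν u ≤ cgf ν v := by
  have hu := mem_interior_integrableExpSet hint u
  have hM : 0 < ∫ x, Real.exp (u * x) ∂ν := integral_exp_pos (hint u)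
  have hd : (∫ x, x * Real.exp (u * x) ∂ν) = cgf' ν u * ∫ x, Real.exp (u * x) ∂ν := by
    have h : cgf' ν u = (∫ x, x * Real.exp (u * x) ∂ν) / ∫ x, Real.exp (u * x) ∂ν :=
      ProbabilityTheory.deriv_cgf hu
    rw [h, div_mul_cancel₀ _ hM.ne']
  have hx : Integrable (fun x => x * Real.exp (u * x)) ν := by
    simpa using ProbabilityTheory.integrable_pow_mul_exp_of_mem_interior_integrableExpSet hu 1
  set c := (v - u) * cgf' ν u with hc
  have key : Real.exp c * ∫ x, Real.exp (u * x) ∂ν ≤ ∫ x, Real.exp (v * x) ∂ν := by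
    have e : Real.exp c * ∫ x, Real.exp (u * x) ∂ν
        = ∫ x, Real.exp c *
          ((1 - c) * Real.exp (u * x) + (v - u) * (x * Real.exp (u * x))) ∂ν := by
      rw [integral_const_mul, integral_add ((hint u).const_mul _) (hx.const_mul _),
        integral_const_mul, integral_const_mul, hd, hc]
      ring
    rw [e]
    refine integral_mono ((((hint u).const_mul _).add (hx.const_mul _)).const_mul _) (hint v)
      fun x => ?_
    have h := Real.add_one_le_exp ((v - u) * x - c)
    calc Real.exp c * ((1 - c) * Real.exp (u * x) + (v - u) * (x * Real.exp (u * x)))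
        = Real.exp c * Real.exp (u * x) * ((v - u) * x - c + 1) := by ring
      _ ≤ Real.exp c * Real.exp (u * x) * Real.exp ((v - u) * x - c) := by gcongr
      _ = Real.exp (v * x) := by
        rw [← Real.exp_add, ← Real.exp_add]
        ring_nf
  have h := Real.log_le_log (by positivity) key
  rw [Real.log_mul (Real.exp_pos c).ne' hM.ne', Real.log_exp] at h
  simp only [cgf]
  linarith

lemma cgf_neg_of_symm {ν : Measure ℝ} (hsym : ν.map (fun x : ℝ => -x) = ν) (θ : ℝ) :
    cgf ν (-θ) = cgf ν θ := by
  unfold cgf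
  conv_rhs => rw [← hsym, integral_map (by fun_prop) (by fun_prop)]
  simp

lemma cgf'_neg_of_symm {ν : Measure ℝ} (hsym : ν.map (fun x : ℝ => -x) = ν) (θ : ℝ) :
    cgf' ν (-θ) = -cgf' ν θ := by
  have h := deriv_comp_neg (cgf ν) θ
  simp only [cgf_neg_of_symm hsym] at h
  unfold cgf'
  linarith

/-- The `B`-tilt shifts the log-mgf by `B` and renormalises it. -/
lemma cgf_tilt {ν : Measure ℝ} [IsProbabilityMeasure ν]
    (hint : ∀ θ : ℝ, Integrable (fun x => Real.exp (θ * x)) ν) (B θ : ℝ) :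
    cgf (ν.withDensity fun x => ENNReal.ofReal (Real.exp (B * x - cgf ν B))) θ
      = cgf ν (θ + B) - cgf ν B := by
  have hM : 0 < ∫ x, Real.exp ((θ + B) * x) ∂ν := integral_exp_pos (hint _)
  have e : ∫ x, Real.exp (θ * x)
        ∂(ν.withDensity fun x => ENNReal.ofReal (Real.exp (B * x - cgf ν B)))
      = Real.exp (-cgf ν B) * ∫ x, Real.exp ((θ + B) * x) ∂ν := by
    rw [integral_withDensity_eq_integral_toReal_smul (by fun_prop) (by simp),
      ← integral_const_mul]
    refine integral_congr_ae (ae_of_all _ fun x => ?_)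
    simp only [smul_eq_mul, ENNReal.toReal_ofReal (Real.exp_nonneg _)]
    rw [← Real.exp_add, ← Real.exp_add]
    ring_nf
  conv_lhs => rw [cgf]
  rw [e, Real.log_mul (Real.exp_pos _).ne' hM.ne', Real.log_exp, ← cgf]
  ring

/-- a non-negative exponential tilt of a symmetric measure (with tails)
is stochastically non-negative. -/
theorem statement4
    (ν : Measure ℝ) [IsProbabilityMeasure ν]
    (hsym : ν.map (fun x : ℝ => -x) = ν)
    (p : ℝ) (hp : 1 ≤ p) (htail : TailCond ν p)
    (B : ℝ) (hB : 0 ≤ B)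
    (μ : Measure ℝ)
    (hμ : μ = ν.withDensity fun x => ENNReal.ofReal (Real.exp (B * x - cgf ν B))) :
    StochNonneg μ := by
  have hint := integrable_exp_mul_of_tailCond hp htail
  have hc : cgf μ = fun θ => cgf ν (θ + B) - cgf ν B := by
    funext θ
    rw [hμ, cgf_tilt hint]
  have hc' : ∀ θ, cgf' μ θ = cgf' ν (θ + B) := fun θ => by
    simp only [cgf', hc, deriv_sub_const, deriv_comp_add_const]
  intro t ht hmem
  have hmem' : t ∈ Ndom μ := by
    obtain ⟨θ, hθ⟩ := hmem
    refine ⟨-θ - 2 * B, ?_⟩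
    rw [hc'] at hθ ⊢
    rw [show -θ - 2 * B + B = -(θ + B) by ring, cgf'_neg_of_symm hsym, hθ, neg_neg]
  refine ⟨hmem', ?_⟩
  have hs : cgf' μ (betaInv μ t) = t := Function.invFun_eq hmem'
  have hr : cgf' μ (betaInv μ (-t)) = -t := Function.invFun_eq hmem
  generalize betaInv μ t = s at hs ⊢
  generalize betaInv μ (-t) = r at hr ⊢
  unfold gammaFn
  rw [hs, hr, hc]
  rw [hc'] at hs
  have hv : cgf' ν (-(r + B)) = t := by
    rw [cgf'_neg_of_symm hsym, ← hc', hr, neg_neg]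
  -- The tangent at `v = -(r + B)` bounds `a (s + B)` from below; evenness turns `a v` into
  -- `a (r + B)`.
  have h2 := cgf_tangent_le hint (-(r + B)) (s + B)
  rw [hv, cgf_neg_of_symm hsym] at h2
  have hBt : 0 ≤ B * t := by positivity
  dsimp only
  linarith

end GibbsMulti
end
end
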